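/- There exists c > 0 such that for all words w and w' with letters in {1,2,3}, each of whose last two letters are different, the operator norms satisfy ‖A_w · A_{w'}‖ ≥ c · ‖A_w‖ · ‖A_{w'}‖; that is, the largest singular value is almost multiplicative along such concatenations: σ1(A_{w·w'}) ≥ c·σ1(A_w)·σ1(A_{w'}). -/

import Mathlib

open Matrix MeasureTheory

noncomputable section

abbrev M3 := Matrix (Fin 3) (Fin 3) ℝ
abbrev E3 := EuclideanSpace ℝ (Fin 3)

/-- The Rauzy generators. -/
def A : Fin 3 → M3
  | 0 => !![1,1,1; 0,1,0; 0,0,1]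
  | 1 => !![1,0,0; 1,1,1; 0,0,1]
  | 2 => !![1,0,0; 0,1,0; 1,1,1]

/-- Product of the matrices along a word. -/
def Aw (w : List (Fin 3)) : M3 := (w.map A).prod

/-- Euclidean norm of a vector in `ℝ³`. -/
def enorm3 (v : Fin 3 → ℝ) : ℝ := Real.sqrt (v 0 ^ 2 + v 1 ^ 2 + v 2 ^ 2)

/-- Largest singular value = `ℓ²` operator norm. -/
def sval1 (g : M3) : ℝ := ‖(Matrix.toEuclideanLin g).toContinuousLinearMap‖

/-- Smallest singular value (for invertible `g`): `σ₃(g) = σ₁(g⁻¹)⁻¹`. -/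
def sval3 (g : M3) : ℝ := (sval1 g⁻¹)⁻¹

/-- Middle singular value (for invertible `g`): `σ₂ = |det g|·σ₁(g⁻¹)/σ₁(g)`. -/
def sval2 (g : M3) : ℝ := |g.det| * sval1 g⁻¹ / sval1 g

def basis3 (i : Fin 3) : Fin 3 → ℝ := Pi.single i 1

def omega3 (v : Fin 3 → ℝ) : ℝ := v 0 + v 1 + v 2

def ofE : E3 → (Fin 3 → ℝ) := WithLp.equiv 2 (Fin 3 → ℝ)
def toE : (Fin 3 → ℝ) → E3 := (WithLp.equiv 2 (Fin 3 → ℝ)).symm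

/-- The standard 2-simplex in `ℝ³` (with the Euclidean metric). -/
def simplex : Set E3 := {x | (∀ i, 0 ≤ ofE x i) ∧ omega3 (ofE x) = 1}

/-- The projective action of the word `w` on the simplex. -/
def fmap (w : List (Fin 3)) (x : E3) : E3 :=
  toE ((omega3 ((Aw w) *ᵥ ofE x))⁻¹ • ((Aw w) *ᵥ ofE x))

/-- The Rauzy gasket. -/
def gasket : Set E3 :=
  ⋂ n : ℕ, ⋃ w ∈ {w : List (Fin 3) | w.length = n + 1}, fmap w '' simplex

/-- Falconer's singular value function. -/
def phi (s : ℝ) (g : M3) : ℝ :=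
  if s ≤ 1 then (sval2 g / sval1 g) ^ s
  else (sval2 g / sval1 g) * (sval3 g / sval1 g) ^ (s - 1)

/-- The affinity exponent of the Rauzy semigroup. -/
def sA : ℝ :=
  sSup {s : ℝ | s ∈ Set.Ioc (0:ℝ) 2 ∧
    ¬ Summable fun w : {w : List (Fin 3) // w ≠ []} => phi s (Aw w.1)}

/-- A word has its last `k` letters not all the same. -/
def LastNotAllSame (w : List (Fin 3)) (k : ℕ) : Prop :=
  k ≤ w.length ∧ ¬ ∃ c, ∀ x ∈ w.drop (w.length - k), x = c

/-- A word's last two letters are different. -/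
def LastTwoDiff (w : List (Fin 3)) : Prop :=
  ∃ u a b, w = u ++ [a, b] ∧ a ≠ b

/-- The Cartan projection `κ(g) = (log σ₁, log σ₂, log σ₃)`. -/
def kappa (g : M3) : Fin 3 → ℝ :=
  ![Real.log (sval1 g), Real.log (sval2 g), Real.log (sval3 g)]

/-- The linear functional `ψ_s` on the Cartan algebra. -/
def psi (s : ℝ) (lam : Fin 3 → ℝ) : ℝ := (lam 0 - lam 1) + (s - 1) * (lam 0 - lam 2)

end

/-!
The `ℓ²` operator norm of a nonnegative matrix is comparable to the sum `1ᵀ M 1` of its entries,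
and `1ᵀ (M N) 1` is the dot product of the column sums of `M` with the row sums of `N`. So the norm
of `M N` is almost `‖M‖ * ‖N‖` as soon as the column sums of `M` are comparable to each other.

Right multiplication by `A a` adds the `a`-th column sum to the other two. Starting from
`(1, 1, 1)`, this preserves the triangle inequalities between the three column sums. Along
`a, a, a, …` the `a`-th column sum stays behind the other two, but last letters `a ≠ b` force every
column sum to lie between one and three times the `b`-th.
-/

section EntrySum

open scoped Matrix.Norms.L2Operator

variable {l m n R 𝕜 : Type*} [Fintype l] [Fintype m] [Fintype n]

/-- The sum `1ᵀ M 1` of all entries of `M`, which for nonnegative `M` is the entrywise `ℓ¹` norm.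
In the same spirit `1 ᵥ* M` is the vector of column sums of `M` throughout. -/
def entrySum [NonAssocSemiring R] (M : Matrix m n R) : R := 1 ⬝ᵥ M *ᵥ 1

lemma entrySum_eq_sum [NonAssocSemiring R] (M : Matrix m n R) :
    entrySum M = ∑ i, ∑ j, M i j := by
  simp only [entrySum, one_dotProduct, mulVec, dotProduct_one]

lemma entrySum_mul [Semiring R] (M : Matrix l m R) (N : Matrix m n R) :
    entrySum (M * N) = (1 ᵥ* M) ⬝ᵥ (N *ᵥ 1) := by
  rw [entrySum, ← mulVec_mulVec, dotProduct_mulVec]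

section Ordered

variable [Semiring R] [PartialOrder R] [IsOrderedRing R]

lemma entrySum_nonneg {M : Matrix m n R} (hM : ∀ i j, 0 ≤ M i j) : 0 ≤ entrySum M := by
  rw [entrySum_eq_sum]
  exact Finset.sum_nonneg fun i _ => Finset.sum_nonneg fun j _ => hM i j

lemma entrySum_le_of_vecMul_le {M : Matrix m n R} {C : R} (hM : ∀ j, (1 ᵥ* M) j ≤ C) :
    entrySum M ≤ Fintype.card n * C := by
  rw [entrySum, dotProduct_mulVec, dotProduct_one, ← nsmul_eq_mul]
  exact Finset.sum_le_card_nsmul Finset.univ (1 ᵥ* M) C fun j _ => hM j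

lemma entrySum_mul_entrySum_le {M : Matrix l m R} {N : Matrix m n R} {κ : R}
    (hM : ∀ j, entrySum M ≤ κ * (1 ᵥ* M) j) (hN : ∀ i j, 0 ≤ N i j) :
    entrySum M * entrySum N ≤ κ * entrySum (M * N) := by
  have rowSum_nonneg : 0 ≤ N *ᵥ 1 := fun i => by
    rw [mulVec, dotProduct_one]
    exact Finset.sum_nonneg fun j _ => hN i j
  calc entrySum M * entrySum N
      = (entrySum M • 1) ⬝ᵥ (N *ᵥ 1) := by rw [smul_dotProduct, smul_eq_mul, ← entrySum]
    _ ≤ (κ • (1 ᵥ* M)) ⬝ᵥ (N *ᵥ 1) :=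
      dotProduct_le_dotProduct_of_nonneg_right
        (fun j => by simpa only [Pi.smul_apply, Pi.one_apply, smul_eq_mul, mul_one] using hM j)
        rowSum_nonneg
    _ = κ * entrySum (M * N) := by rw [smul_dotProduct, smul_eq_mul, entrySum_mul]

end Ordered

lemma euclideanNorm_one {ι : Type*} [Fintype ι] :
    ‖(WithLp.toLp 2 1 : EuclideanSpace ℝ ι)‖ = √(Fintype.card ι) := by
  simp [EuclideanSpace.norm_eq]

lemma euclideanNorm_le_sum_norm [RCLike 𝕜] (x : EuclideanSpace 𝕜 n) :
    ‖x‖ ≤ ∑ i, ‖x i‖ := by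
  rw [EuclideanSpace.norm_eq]
  exact Real.sqrt_le_iff.2 ⟨Finset.sum_nonneg fun i _ => norm_nonneg _,
    Finset.sum_sq_le_sq_sum_of_nonneg fun i _ => norm_nonneg _⟩

variable [DecidableEq n]

lemma l2_opNorm_le_sum_norm [RCLike 𝕜] (M : Matrix m n 𝕜) :
    ‖M‖ ≤ ∑ i, ∑ j, ‖M i j‖ := by
  rw [l2_opNorm_def]
  refine ContinuousLinearMap.opNorm_le_bound _
    (Finset.sum_nonneg fun i _ => Finset.sum_nonneg fun j _ => norm_nonneg _) fun x => ?_
  calc ‖WithLp.toLp 2 (M *ᵥ x)‖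
      ≤ ∑ i, ‖∑ j, M i j * x j‖ := euclideanNorm_le_sum_norm _
    _ ≤ ∑ i, ∑ j, ‖M i j‖ * ‖x‖ := by
      refine Finset.sum_le_sum fun i _ => norm_sum_le_of_le _ fun j _ => ?_
      rw [norm_mul]
      gcongr
      exact PiLp.norm_apply_le x j
    _ = (∑ i, ∑ j, ‖M i j‖) * ‖x‖ := by simp only [Finset.sum_mul]

lemma l2_opNorm_le_entrySum {M : Matrix m n ℝ} (hM : ∀ i j, 0 ≤ M i j) : ‖M‖ ≤ entrySum M := by
  simpa only [entrySum_eq_sum, Real.norm_of_nonneg (hM _ _)] using l2_opNorm_le_sum_norm M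

lemma entrySum_le_l2_opNorm (M : Matrix m n ℝ) :
    entrySum M ≤ √(Fintype.card m) * √(Fintype.card n) * ‖M‖ := by
  calc entrySum M
      = inner ℝ (WithLp.toLp 2 1) (WithLp.toLp 2 (M *ᵥ 1)) := by
        rw [EuclideanSpace.inner_toLp_toLp, star_trivial, dotProduct_comm, entrySum]
    _ ≤ ‖(WithLp.toLp 2 1 : EuclideanSpace ℝ m)‖ * ‖WithLp.toLp 2 (M *ᵥ 1)‖ :=
        real_inner_le_norm _ _
    _ ≤ √(Fintype.card m) * (‖M‖ * √(Fintype.card n)) := by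
        rw [euclideanNorm_one, ← euclideanNorm_one (ι := n)]
        gcongr
        exact l2_opNorm_mulVec M (WithLp.toLp 2 1)
    _ = √(Fintype.card m) * √(Fintype.card n) * ‖M‖ := by ring

lemma l2_opNorm_mul_l2_opNorm_le [DecidableEq m] {M : Matrix l m ℝ} {N : Matrix m n ℝ} {κ : ℝ}
    (hκ : 0 ≤ κ) (hM : ∀ i j, 0 ≤ M i j) (hMκ : ∀ j, entrySum M ≤ κ * (1 ᵥ* M) j)
    (hN : ∀ i j, 0 ≤ N i j) :
    ‖M‖ * ‖N‖ ≤ κ * (√(Fintype.card l) * √(Fintype.card n) * ‖M * N‖) :=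
  calc ‖M‖ * ‖N‖
      ≤ entrySum M * entrySum N :=
        mul_le_mul (l2_opNorm_le_entrySum hM) (l2_opNorm_le_entrySum hN) (norm_nonneg _)
          (entrySum_nonneg hM)
    _ ≤ κ * entrySum (M * N) := entrySum_mul_entrySum_le hMκ hN
    _ ≤ κ * (√(Fintype.card l) * √(Fintype.card n) * ‖M * N‖) :=
        mul_le_mul_of_nonneg_left (entrySum_le_l2_opNorm _) hκ

end EntrySum

lemma vecMul_A_apply (v : Fin 3 → ℝ) (a j : Fin 3) :
    (v ᵥ* A a) j = if j = a then v a else v j + v a := by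
  fin_cases a <;> fin_cases j <;> simp [A, vecMul, dotProduct, Fin.sum_univ_three] <;> ring

/-- The entries of `v` satisfy all triangle inequalities. The index `i` may coincide with `j` or
`k`, so nonnegativity of the entries is included. -/
def IsTriangular {ι : Type*} (v : ι → ℝ) : Prop :=
  ∀ i j k, j ≠ k → v i ≤ v j + v k

namespace IsTriangular

lemma one {ι : Type*} : IsTriangular (1 : ι → ℝ) := fun _ _ _ _ => by norm_num

lemma nonneg {ι : Type*} [Nontrivial ι] {v : ι → ℝ} (hv : IsTriangular v) (i : ι) : 0 ≤ v i := by
  obtain ⟨j, hji⟩ := exists_ne i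
  linarith [hv j j i hji]

variable {v : Fin 3 → ℝ}

lemma vecMul_A (hv : IsTriangular v) (a : Fin 3) : IsTriangular (v ᵥ* A a) := by
  intro i j k hjk
  have h_nonneg := hv.nonneg
  have h_tri := hv i j k hjk
  -- As `j ≠ k`, the right-hand side gains `v a` at least once, the left-hand side at most once.
  simp only [vecMul_A_apply]
  grind

lemma vecMul_A_vecMul_A_le (hv : IsTriangular v) {a b : Fin 3} (hab : a ≠ b) (j k : Fin 3) :
    (v ᵥ* A a ᵥ* A b) k ≤ 3 * (v ᵥ* A a ᵥ* A b) j := by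
  set u := v ᵥ* A a with hu
  have hu_tri : IsTriangular u := hv.vecMul_A a
  have ha_le_hb : u a ≤ u b := by
    simp only [hu, vecMul_A_apply, if_true, if_neg hab.symm]
    linarith [hv.nonneg b]
  have lower : u b ≤ (u ᵥ* A b) j := by
    rw [vecMul_A_apply]
    split_ifs <;> linarith [hu_tri.nonneg j]
  have upper : (u ᵥ* A b) k ≤ 3 * u b := by
    rw [vecMul_A_apply]
    split_ifs <;> linarith [hu_tri.nonneg b, hu_tri k a b hab]
  linarith

end IsTriangular

lemma Aw_append (u v : List (Fin 3)) : Aw (u ++ v) = Aw u * Aw v := by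
  simp only [Aw, List.map_append, List.prod_append]

lemma Aw_append_singleton (w : List (Fin 3)) (a : Fin 3) : Aw (w ++ [a]) = Aw w * A a := by
  simp only [Aw, List.map_append, List.prod_append, List.map_singleton, List.prod_singleton]

lemma A_nonneg (a i j : Fin 3) : 0 ≤ A a i j := by
  fin_cases a <;> fin_cases i <;> fin_cases j <;> simp [A]

lemma Aw_nonneg (w : List (Fin 3)) (i j : Fin 3) : 0 ≤ Aw w i j := by
  induction w using List.reverseRecOn generalizing j with
  | nil =>
    rw [Aw, List.map_nil, List.prod_nil, one_apply]
    split_ifs <;> norm_num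
  | append_singleton w a ih =>
    rw [Aw_append_singleton, mul_apply]
    exact Finset.sum_nonneg fun k _ => mul_nonneg (ih k) (A_nonneg a k j)

lemma isTriangular_one_vecMul_Aw (w : List (Fin 3)) : IsTriangular (1 ᵥ* Aw w) := by
  induction w using List.reverseRecOn with
  | nil => simpa only [Aw, List.map_nil, List.prod_nil, vecMul_one] using IsTriangular.one
  | append_singleton w a ih =>
    rw [Aw_append_singleton, ← vecMul_vecMul]
    exact ih.vecMul_A a

lemma LastTwoDiff.entrySum_Aw_le {w : List (Fin 3)} (hw : LastTwoDiff w) (j : Fin 3) :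
    entrySum (Aw w) ≤ 9 * (1 ᵥ* Aw w) j := by
  obtain ⟨u, a, b, rfl, hab⟩ := hw
  have h_split : 1 ᵥ* Aw (u ++ [a, b]) = 1 ᵥ* Aw u ᵥ* A a ᵥ* A b := by
    rw [List.append_cons, Aw_append_singleton, Aw_append_singleton, ← vecMul_vecMul,
      ← vecMul_vecMul]
  have h_le (k : Fin 3) :
      (1 ᵥ* Aw (u ++ [a, b])) k ≤ 3 * (1 ᵥ* Aw (u ++ [a, b])) j := by
    rw [h_split]
    exact (isTriangular_one_vecMul_Aw u).vecMul_A_vecMul_A_le hab j k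
  calc entrySum (Aw (u ++ [a, b]))
      ≤ Fintype.card (Fin 3) * (3 * (1 ᵥ* Aw (u ++ [a, b])) j) := entrySum_le_of_vecMul_le h_le
    _ = 9 * (1 ᵥ* Aw (u ++ [a, b])) j := by rw [Fintype.card_fin]; push_cast; ring

open scoped Matrix.Norms.L2Operator in
lemma sval1_eq_l2_opNorm (M : M3) : sval1 M = ‖M‖ := rfl

theorem sval1_almost_multiplicative_general :
    ∃ c > (0:ℝ), ∀ w : List (Fin 3), LastTwoDiff w → ∀ N : M3, (∀ i j, 0 ≤ N i j) →
      c * sval1 (Aw w) * sval1 N ≤ sval1 (Aw w * N) := by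
  refine ⟨1 / 27, by norm_num, fun w hw N hN => ?_⟩
  have h_mul : sval1 (Aw w) * sval1 N ≤ 9 * (√3 * √3 * sval1 (Aw w * N)) := by
    simpa only [Fintype.card_fin, Nat.cast_ofNat, ← sval1_eq_l2_opNorm] using
      l2_opNorm_mul_l2_opNorm_le (by norm_num) (Aw_nonneg w) hw.entrySum_Aw_le hN
  rw [Real.mul_self_sqrt zero_le_three] at h_mul
  linarith

/-- Almost multiplicativity of the top singular value along concatenations of words whose
last two letters differ. -/
theorem sval1_almost_multiplicative :
    ∃ c > (0:ℝ), ∀ w w' : List (Fin 3), LastTwoDiff w → LastTwoDiff w' →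
      c * sval1 (Aw w) * sval1 (Aw w') ≤ sval1 (Aw (w ++ w')) := by
  obtain ⟨c, hc, h⟩ := sval1_almost_multiplicative_general
  exact ⟨c, hc, fun w w' hw _ => Aw_append w w' ▸ h w hw _ (Aw_nonneg w')⟩
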